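/- Let {f_α}_{α∈A} : 𝒮_X → 𝒮_Y be a morphism between two πτ-spectra 𝒮_X = {X_α, p_α^β, A} and 𝒮_Y = {Y_α, π_α^β, A} with surjective limit projections. If the limit map lim f_α : lim 𝒮_X → lim 𝒮_Y is skeletal, then there exists a cofinal τ-closed subset B ⊆ A such that for every α ∈ B the map f_α is skeletal and the limit ↓α-square is skeletal, and for all α ≤ β in B the bonding ↓_α^β-square is skeletal. -/

import Mathlib

open Set Topology

universe u

/-- A continuous map `f : X → Y` is *skeletal* if for every non-empty open `U ⊆ X` the
closure of `f(U)` has non-empty interior. -/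
def Skeletal {X Y : Type*} [TopologicalSpace X] [TopologicalSpace Y] (f : X → Y) : Prop :=
  ∀ U : Set X, IsOpen U → U.Nonempty → (interior (closure (f '' U))).Nonempty

/-- A commutative square (top map `g' : X' → Y'`, bottom map `g : X → Y`, vertical maps
`qX : X' → X`, `qY : Y' → Y`) is *skeletal* if for each point `x ∈ X` and each neighborhood
`U` of `x` there is a non-empty open `V ⊆ Y` with `V ⊆ cl (g '' U)` and
`qY ⁻¹' V ⊆ cl (g' '' (qX ⁻¹' U))`. -/
def SkeletalSquare {X Y X' Y' : Type*} [TopologicalSpace X] [TopologicalSpace Y]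
    [TopologicalSpace X'] [TopologicalSpace Y']
    (g' : X' → Y') (g : X → Y) (qX : X' → X) (qY : Y' → Y) : Prop :=
  ∀ x : X, ∀ U ∈ 𝓝 x, ∃ V : Set Y, IsOpen V ∧ V.Nonempty ∧ V ⊆ closure (g '' U) ∧
    qY ⁻¹' V ⊆ closure (g' '' (qX ⁻¹' U))

/-- An *inverse spectrum* over a partially ordered index set `A`: topological spaces `X a`
together with continuous bonding maps `bond h : X b → X a` for `h : a ≤ b`, satisfying the
usual identity and composition laws. -/
structure InvSpec (A : Type u) [PartialOrder A] : Type (u + 1) where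
  X : A → Type u
  [topX : ∀ a, TopologicalSpace (X a)]
  bond : ∀ {a b : A}, a ≤ b → X b → X a
  bond_cont : ∀ {a b : A} (h : a ≤ b), Continuous (bond h)
  bond_refl : ∀ (a : A) (x : X a), bond le_rfl x = x
  bond_comp : ∀ {a b c : A} (hab : a ≤ b) (hbc : b ≤ c) (x : X c),
    bond hab (bond hbc x) = bond (hab.trans hbc) x

attribute [instance] InvSpec.topX

variable {A : Type u} [PartialOrder A]

/-- The limit `lim 𝒮` of an inverse spectrum, as the set of threads in the product. -/
def InvSpec.limitSet (S : InvSpec A) : Set (∀ a, S.X a) :=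
  {x | ∀ (a b : A) (h : a ≤ b), S.bond h (x b) = x a}

/-- The limit projection `p_a : lim 𝒮 → X a`. -/
def InvSpec.proj (S : InvSpec A) (a : A) : S.limitSet → S.X a := fun x => x.1 a

/-- A *morphism* between two inverse spectra over the same index set: a family of continuous
maps `f a : X a → Y a` commuting with the bonding maps. -/
structure SpecMor (S T : InvSpec A) where
  maps : ∀ a, S.X a → T.X a
  maps_cont : ∀ a, Continuous (maps a)
  comm : ∀ {a b : A} (h : a ≤ b) (x : S.X b), maps a (S.bond h x) = T.bond h (maps b x)

/-- The limit map `lim f_a : lim 𝒮_X → lim 𝒮_Y` of a morphism of spectra. -/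
def SpecMor.limMap {S T : InvSpec A} (F : SpecMor S T) : S.limitSet → T.limitSet :=
  fun x => ⟨fun a => F.maps a (x.1 a),
    fun a b h => by rw [← F.comm h (x.1 b), x.2 a b h]⟩

/-- The *limit `↓a`-square* of a morphism (top map `lim f`, bottom map `f a`, verticals the
limit projections) is skeletal. -/
def LimitSquareSkeletal {S T : InvSpec A} (F : SpecMor S T) (a : A) : Prop :=
  SkeletalSquare F.limMap (F.maps a) (S.proj a) (T.proj a)

/-- The *bonding `↓_a^b`-square* of a morphism (top map `f b`, bottom map `f a`, verticals
the bonding maps) is skeletal. -/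
def BondingSquareSkeletal {S T : InvSpec A} (F : SpecMor S T) {a b : A} (h : a ≤ b) : Prop :=
  SkeletalSquare (F.maps b) (F.maps a) (S.bond h) (T.bond h)

/-- A family of non-empty open sets is a *π-base* if every non-empty open set contains a
member of the family. -/
def IsPiBase {Z : Type*} [TopologicalSpace Z] (B : Set (Set Z)) : Prop :=
  (∀ U ∈ B, IsOpen U ∧ U.Nonempty) ∧
  ∀ U : Set Z, IsOpen U → U.Nonempty → ∃ V ∈ B, V ⊆ U

/-- The *π-weight* of a space: the smallest cardinality of a π-base. -/
noncomputable def piWeight (Z : Type u) [TopologicalSpace Z] : Cardinal.{u} :=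
  ⨅ B : {B : Set (Set Z) // IsPiBase B}, Cardinal.mk B.1

/-- A partially ordered set is *κ-directed* if every subset of cardinality `≤ κ` has an
upper bound. -/
def CardDirected (A : Type u) [PartialOrder A] (κ : Cardinal.{u}) : Prop :=
  ∀ K : Set A, Cardinal.mk K ≤ κ → ∃ ub : A, ∀ k ∈ K, k ≤ ub

/-- A partially ordered set is *ω-complete* if every (non-empty) countable chain has a least
upper bound. -/
def OmegaComplete (A : Type u) [PartialOrder A] : Prop :=
  ∀ C : Set A, C.Countable → C.Nonempty → IsChain (· ≤ ·) C → ∃ b : A, IsLUB C b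

/-- The limit of the restriction of a spectrum to a subset `C` of the index set. -/
def InvSpec.limitSetOn (S : InvSpec A) (C : Set A) : Set (∀ c : C, S.X c) :=
  {x | ∀ (c d : C) (h : (c : A) ≤ (d : A)), S.bond h (x d) = x c}

/-- The canonical map `X g → lim {X a, a ∈ C}` when `g` is a least upper bound of `C`. -/
def InvSpec.toLimitOn (S : InvSpec A) {C : Set A} {g : A} (hg : IsLUB C g) :
    S.X g → S.limitSetOn C :=
  fun xg => ⟨fun c => S.bond (hg.1 c.2) xg, fun c d h => S.bond_comp h (hg.1 d.2) xg⟩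

/-- A spectrum is *continuous* (τ-continuous) if for every non-empty directed subset `C` of
the index set having a least upper bound `g`, the canonical map `X g → lim {X a, a ∈ C}` is
a homeomorphism. -/
def InvSpec.IsContinuousSpectrum (S : InvSpec A) : Prop :=
  ∀ (C : Set A) (g : A), C.Nonempty → DirectedOn (· ≤ ·) C → ∀ hg : IsLUB C g,
    IsHomeomorph (S.toLimitOn hg)

/-- A *πτ-spectrum*: all spaces have π-weight `≤ τ`, the index set is τ-directed and
ω-complete, and the spectrum is τ-continuous. -/
def IsPiTauSpectrum (τ : Cardinal.{u}) (S : InvSpec A) : Prop :=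
  (∀ a : A, piWeight (S.X a) ≤ τ) ∧ CardDirected A τ ∧ OmegaComplete A ∧
    S.IsContinuousSpectrum

/-- A subset `C` of a directed poset is *cofinal* if every element of the poset is below
some element of `C`. -/
def IsCofinalSub {A : Type u} [PartialOrder A] (C : Set A) : Prop :=
  ∀ a : A, ∃ b ∈ C, a ≤ b

/-- A subset `C` is *τ-closed* (equivalently ω-closed) if for each (non-empty) directed
subset `D ⊆ C` having a least upper bound in `A`, this least upper bound belongs to `C`. -/
def IsSupClosed {A : Type u} [PartialOrder A] (C : Set A) : Prop :=
  ∀ D ⊆ C, D.Nonempty → DirectedOn (· ≤ ·) D → ∀ g : A, IsLUB D g → g ∈ C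

/-! Call a subset of `lim 𝒮_Y` full at level `b` if it contains the cylinder over a non-empty open
subset of `Y b`. If `U ⊆ X a` is open and non-empty, then, as `lim f` is skeletal, the closure of
the image of the cylinder over `U` is full at some level. Letting `U` run through a π-base of
size `≤ τ` and using τ-directedness, one level `b ≥ a` serves all `U` at once. Iterating
`a ↦ b` and taking the supremum `g` of the resulting sequence gives a level that serves itself:
by continuity, every non-empty open subset of `X g` contains the non-empty preimage of an open set
from an earlier level. Levels serving themselves are exactly those with skeletal limit square, and
the same continuity argument shows that they are closed under suprema of directed sets. -/

theorem SkeletalSquare.skeletal {X Y X' Y' : Type*} [TopologicalSpace X] [TopologicalSpace Y]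
    [TopologicalSpace X'] [TopologicalSpace Y'] {g' : X' → Y'} {g : X → Y} {qX : X' → X}
    {qY : Y' → Y} (hsq : SkeletalSquare g' g qX qY) : Skeletal g := by
  rintro U hU ⟨x, hx⟩
  obtain ⟨V, hV, hne, hVU, -⟩ := hsq x U (hU.mem_nhds hx)
  exact hne.mono (interior_maximal hVU hV)

theorem subset_closure_image_of_preimage_subset {X Y X' Y' : Type*} [TopologicalSpace Y]
    [TopologicalSpace Y'] {g' : X' → Y'} {g : X → Y} {qX : X' → X} {qY : Y' → Y}
    (hcont : Continuous qY) (hdense : DenseRange qY) (hcomm : ∀ x, qY (g' x) = g (qX x))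
    {U : Set X} {V : Set Y} (hV : IsOpen V) (hVU : qY ⁻¹' V ⊆ closure (g' '' (qX ⁻¹' U))) :
    V ⊆ closure (g '' U) := by
  refine (hdense.open_subset_closure_inter hV).trans (closure_minimal ?_ isClosed_closure)
  rintro _ ⟨hy, y, rfl⟩
  refine map_mem_closure hcont (hVU hy) ?_
  rintro _ ⟨x, hx, rfl⟩
  exact ⟨qX x, hx, (hcomm x).symm⟩

theorem SkeletalSquare.of_comp {X Y X' Y' X'' Y'' : Type*} [TopologicalSpace X]
    [TopologicalSpace Y] [TopologicalSpace X'] [TopologicalSpace Y'] [TopologicalSpace X'']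
    [TopologicalSpace Y''] {g'' : X'' → Y''} {g' : X' → Y'} {g : X → Y} {rX : X'' → X'}
    {rY : Y'' → Y'} {qX : X' → X} {qY : Y' → Y}
    (hsq : SkeletalSquare g'' g (qX ∘ rX) (qY ∘ rY)) (hqY : Continuous qY)
    (hrY : Continuous rY) (hdense : DenseRange rY) (hcomm : ∀ x, rY (g'' x) = g' (rX x)) :
    SkeletalSquare g' g qX qY := by
  intro x U hU
  obtain ⟨V, hV, hne, hVU, hVU''⟩ := hsq x U hU
  exact ⟨V, hV, hne, hVU,
    subset_closure_image_of_preimage_subset hrY hdense hcomm (hV.preimage hqY) hVU''⟩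

theorem exists_isPiBase_mk_eq_piWeight (Z : Type u) [TopologicalSpace Z] :
    ∃ P : Set (Set Z), IsPiBase P ∧ Cardinal.mk P = piWeight Z := by
  have : Nonempty {P : Set (Set Z) // IsPiBase P} :=
    ⟨{U | IsOpen U ∧ U.Nonempty}, fun _ h => h, fun U hU hne => ⟨U, ⟨hU, hne⟩, Subset.rfl⟩⟩
  obtain ⟨⟨P, hP⟩, hcard⟩ :=
    ciInf_mem fun P : {P : Set (Set Z) // IsPiBase P} => Cardinal.mk P.1
  exact ⟨P, hP, hcard⟩

theorem CardDirected.isDirectedOrder {κ : Cardinal.{u}} (hA : CardDirected A κ)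
    (hκ : Cardinal.aleph0 ≤ κ) : IsDirectedOrder A where
  directed a b := by
    have hcard : Cardinal.mk ({a, b} : Set A) ≤ κ := (toFinite {a, b}).lt_aleph0.le.trans hκ
    obtain ⟨c, hc⟩ := hA {a, b} hcard
    exact ⟨c, hc a (by simp), hc b (by simp)⟩

theorem CardDirected.exists_forall_le {κ : Cardinal.{u}} (hA : CardDirected A κ) {ι : Type u}
    (hι : Cardinal.mk ι ≤ κ) (f : ι → A) : ∃ b, ∀ i, f i ≤ b := by
  obtain ⟨b, hb⟩ := hA (range f) (Cardinal.mk_range_le.trans hι)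
  exact ⟨b, fun i => hb _ (mem_range_self i)⟩

theorem exists_monotone_seq_of_forall_exists_ge {α : Type*} [Preorder α] {R : α → α → Prop}
    (hR : ∀ a, ∃ b, a ≤ b ∧ R a b) (a : α) :
    ∃ s : ℕ → α, Monotone s ∧ s 0 = a ∧ ∀ n, R (s n) (s (n + 1)) := by
  choose next hle hnext using hR
  refine ⟨fun n => next^[n] a, monotone_nat_of_le_succ fun n => ?_, rfl, fun n => ?_⟩
  · simpa only [Function.iterate_succ_apply'] using hle (next^[n] a)
  · simpa only [Function.iterate_succ_apply'] using hnext (next^[n] a)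

namespace InvSpec

variable (S : InvSpec A)

theorem continuous_proj (a : A) : Continuous (S.proj a) :=
  (continuous_apply a).comp continuous_subtype_val

theorem bond_proj {a b : A} (h : a ≤ b) (x : S.limitSet) :
    S.bond h (S.proj b x) = S.proj a x :=
  x.2 a b h

theorem exists_isOpen_preimage_subset_of_isInducing {ι : Type*} [Nonempty ι] {c : ι → A}
    (hc : Directed (· ≤ ·) c) {Z : Type*} [TopologicalSpace Z] {q : ∀ i, Z → S.X (c i)}
    (hq : IsInducing fun z i => q i z)
    (hbond : ∀ {i j} (h : c i ≤ c j) (z : Z), S.bond h (q j z) = q i z)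
    {z : Z} {U : Set Z} (hU : U ∈ 𝓝 z) :
    ∃ i, ∃ W : Set (S.X (c i)), IsOpen W ∧ q i z ∈ W ∧ q i ⁻¹' W ⊆ U := by
  have hnhds : 𝓝 z = ⨅ i, (𝓝 (q i z)).comap (q i) := by
    simp only [hq.nhds_eq_comap, nhds_pi, Filter.pi, Filter.comap_iInf, Filter.comap_comap,
      Function.comp_def]
  have hanti : ∀ {i j}, c i ≤ c j →
      (𝓝 (q j z)).comap (q j) ≤ (𝓝 (q i z)).comap (q i) := fun {i j} h => by
    have hqi : q i = S.bond h ∘ q j := funext fun y => (hbond h y).symm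
    rw [hqi, ← Filter.comap_comap]
    exact Filter.comap_mono (S.bond_cont h).continuousAt.tendsto.le_comap
  have hdir : Directed (· ≥ ·) fun i => (𝓝 (q i z)).comap (q i) :=
    fun i j => (hc i j).imp fun _ hk => ⟨hanti hk.1, hanti hk.2⟩
  rw [hnhds, Filter.mem_iInf_of_directed hdir] at hU
  obtain ⟨i, hi⟩ := hU
  obtain ⟨W, ⟨hzW, hW⟩, hWU⟩ := ((nhds_basis_opens (q i z)).comap (q i)).mem_iff.mp hi
  exact ⟨i, W, hW, hzW, hWU⟩

theorem exists_isOpen_proj_preimage_subset [Nonempty A] [IsDirectedOrder A]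
    {x : S.limitSet} {U : Set S.limitSet} (hU : U ∈ 𝓝 x) :
    ∃ a, ∃ W : Set (S.X a), IsOpen W ∧ S.proj a x ∈ W ∧ S.proj a ⁻¹' W ⊆ U :=
  S.exists_isOpen_preimage_subset_of_isInducing (c := id) directed_id
    IsInducing.subtypeVal S.bond_proj hU

variable {S}

theorem IsContinuousSpectrum.exists_isOpen_bond_preimage_subset (hS : S.IsContinuousSpectrum)
    {D : Set A} {g : A} (hne : D.Nonempty) (hD : DirectedOn (· ≤ ·) D) (hg : IsLUB D g)
    {x : S.X g} {U : Set (S.X g)} (hU : U ∈ 𝓝 x) :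
    ∃ d, ∃ hd : d ∈ D, ∃ W : Set (S.X d),
      IsOpen W ∧ S.bond (hg.1 hd) x ∈ W ∧ S.bond (hg.1 hd) ⁻¹' W ⊆ U := by
  have : Nonempty D := hne.to_subtype
  obtain ⟨d, W, hW⟩ := S.exists_isOpen_preimage_subset_of_isInducing hD.directed_val
    (q := fun d => S.bond (hg.1 d.2)) (IsInducing.subtypeVal.comp (hS D g hne hD hg).isInducing)
    (fun h => S.bond_comp h _) hU
  exact ⟨d, d.2, W, hW⟩

/-- A set `K ⊆ lim 𝒮` is *full at level `b`* if it contains the cylinder `p_b⁻¹(V)` over some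
non-empty open `V ⊆ X b`. -/
def FullAt (S : InvSpec A) (b : A) (K : Set S.limitSet) : Prop :=
  ∃ V : Set (S.X b), IsOpen V ∧ V.Nonempty ∧ S.proj b ⁻¹' V ⊆ K

theorem FullAt.mono_set {b : A} {K L : Set S.limitSet} (hK : S.FullAt b K) (hKL : K ⊆ L) :
    S.FullAt b L := by
  obtain ⟨V, hV, hne, hVK⟩ := hK
  exact ⟨V, hV, hne, hVK.trans hKL⟩

theorem FullAt.mono_level {b c : A} {K : Set S.limitSet} (hK : S.FullAt b K) (hbc : b ≤ c)
    (hdense : DenseRange (S.proj b)) : S.FullAt c K := by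
  obtain ⟨V, hV, hne, hVK⟩ := hK
  obtain ⟨x, hx⟩ := hdense.exists_mem_open hV hne
  refine ⟨S.bond hbc ⁻¹' V, hV.preimage (S.bond_cont hbc), ⟨S.proj c x, ?_⟩, fun y hy => hVK ?_⟩
  · rwa [mem_preimage, S.bond_proj]
  · rwa [mem_preimage, mem_preimage, S.bond_proj] at hy

theorem exists_fullAt_of_interior_nonempty [Nonempty A] [IsDirectedOrder A]
    {K : Set S.limitSet} (hK : (interior K).Nonempty) : ∃ b, S.FullAt b K := by
  obtain ⟨x, hx⟩ := hK
  obtain ⟨b, V, hV, hxV, hVK⟩ :=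
    S.exists_isOpen_proj_preimage_subset (mem_interior_iff_mem_nhds.mp hx)
  exact ⟨b, V, hV, ⟨_, hxV⟩, hVK⟩

end InvSpec

namespace SpecMor

variable {S T : InvSpec A} {F : SpecMor S T}

/-- The limit map is *skeletal from level `a` to level `b`* if the closure of the image of the
cylinder over any non-empty open `U ⊆ X a` is full at level `b`. For `a = b` this is skeletality of
the limit `↓a`-square; separating the two levels permits the construction of such `a` as suprema. -/
def SkeletalFromTo (F : SpecMor S T) (a b : A) : Prop :=
  ∀ U : Set (S.X a), IsOpen U → U.Nonempty →
    T.FullAt b (closure (F.limMap '' (S.proj a ⁻¹' U)))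

theorem SkeletalFromTo.mono_right {a b c : A} (hF : F.SkeletalFromTo a b) (hbc : b ≤ c)
    (hT : DenseRange (T.proj b)) : F.SkeletalFromTo a c :=
  fun U hU hne => (hF U hU hne).mono_level hbc hT

theorem SkeletalFromTo.of_isLUB_left (hS : S.IsContinuousSpectrum) {D : Set A} {g b : A}
    (hne : D.Nonempty) (hD : DirectedOn (· ≤ ·) D) (hg : IsLUB D g)
    (hF : ∀ d ∈ D, F.SkeletalFromTo d b) : F.SkeletalFromTo g b := by
  rintro U hU ⟨x, hx⟩
  obtain ⟨d, hd, W, hW, hxW, hWU⟩ :=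
    hS.exists_isOpen_bond_preimage_subset hne hD hg (hU.mem_nhds hx)
  refine (hF d hd W hW ⟨_, hxW⟩).mono_set (closure_mono (image_mono fun z hz => hWU ?_))
  rwa [mem_preimage, S.bond_proj]

theorem skeletalFromTo_of_isPiBase {a b : A} {P : Set (Set (S.X a))} (hP : IsPiBase P)
    (hF : ∀ W ∈ P, T.FullAt b (closure (F.limMap '' (S.proj a ⁻¹' W)))) :
    F.SkeletalFromTo a b := by
  intro U hU hne
  obtain ⟨W, hW, hWU⟩ := hP.2 U hU hne
  exact (hF W hW).mono_set (closure_mono (image_mono (preimage_mono hWU)))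

theorem exists_ge_skeletalFromTo {τ : Cardinal.{u}} (hτ : Cardinal.aleph0 ≤ τ)
    (hA : CardDirected A τ) (hT : ∀ b, DenseRange (T.proj b)) (hF : Skeletal F.limMap) {a : A}
    (hS : DenseRange (S.proj a)) (ha : piWeight (S.X a) ≤ τ) :
    ∃ b, a ≤ b ∧ F.SkeletalFromTo a b := by
  have : Nonempty A := ⟨a⟩
  have : IsDirectedOrder A := hA.isDirectedOrder hτ
  obtain ⟨P, hP, hcard⟩ := exists_isPiBase_mk_eq_piWeight (S.X a)
  have hlevel (W : P) : ∃ b, T.FullAt b (closure (F.limMap '' (S.proj a ⁻¹' W))) := by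
    obtain ⟨hW, hne⟩ := hP.1 W W.2
    exact InvSpec.exists_fullAt_of_interior_nonempty <|
      hF _ (hW.preimage (S.continuous_proj a)) (hS.exists_mem_open hW hne)
  choose level hfull using hlevel
  obtain ⟨c, hc⟩ := hA.exists_forall_le (hcard.trans_le ha) level
  obtain ⟨b, hab, hcb⟩ := exists_ge_ge a c
  exact ⟨b, hab, skeletalFromTo_of_isPiBase hP fun W hW =>
    (hfull ⟨W, hW⟩).mono_level ((hc _).trans hcb) (hT _)⟩

theorem limitSquareSkeletal_iff_skeletalFromTo {a : A} (hT : DenseRange (T.proj a)) :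
    LimitSquareSkeletal F a ↔ F.SkeletalFromTo a a := by
  constructor
  · rintro hsq U hU ⟨x, hx⟩
    obtain ⟨V, hV, hne, -, hVU⟩ := hsq x U (hU.mem_nhds hx)
    exact ⟨V, hV, hne, hVU⟩
  · intro hF x U hU
    obtain ⟨V, hV, hne, hVU⟩ :=
      (hF (interior U) isOpen_interior ⟨x, mem_interior_iff_mem_nhds.mpr hU⟩).mono_set
        (closure_mono (image_mono (preimage_mono interior_subset)))
    have hVU' : V ⊆ closure (F.maps a '' U) :=
      subset_closure_image_of_preimage_subset (qX := S.proj a) (T.continuous_proj a) hT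
        (fun _ => rfl) hV hVU
    exact ⟨V, hV, hne, hVU', hVU⟩

theorem bondingSquareSkeletal_of_limitSquareSkeletal {a b : A} (h : a ≤ b)
    (hT : DenseRange (T.proj b)) (hF : LimitSquareSkeletal F a) : BondingSquareSkeletal F h := by
  have hS_proj : S.proj a = S.bond h ∘ S.proj b := funext fun x => (S.bond_proj h x).symm
  have hT_proj : T.proj a = T.bond h ∘ T.proj b := funext fun y => (T.bond_proj h y).symm
  rw [LimitSquareSkeletal, hS_proj, hT_proj] at hF
  exact hF.of_comp (T.bond_cont h) (T.continuous_proj b) hT fun _ => rfl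

theorem isSupClosed_setOf_limitSquareSkeletal (hS : S.IsContinuousSpectrum)
    (hT : ∀ a, DenseRange (T.proj a)) : IsSupClosed {a | LimitSquareSkeletal F a} := by
  intro D hDF hne hD g hg
  refine (limitSquareSkeletal_iff_skeletalFromTo (hT g)).mpr ?_
  exact .of_isLUB_left hS hne hD hg fun d hd =>
    ((limitSquareSkeletal_iff_skeletalFromTo (hT d)).mp (hDF hd)).mono_right (hg.1 hd) (hT d)

theorem isCofinalSub_setOf_limitSquareSkeletal (hA : OmegaComplete A)
    (hS : S.IsContinuousSpectrum) (hT : ∀ a, DenseRange (T.proj a))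
    (hF : ∀ a, ∃ b, a ≤ b ∧ F.SkeletalFromTo a b) :
    IsCofinalSub {a | LimitSquareSkeletal F a} := by
  intro a
  obtain ⟨s, hs, rfl, hnext⟩ := exists_monotone_seq_of_forall_exists_ge hF a
  have hchain : IsChain (· ≤ ·) (range s) := hs.isChain_range
  obtain ⟨g, hg⟩ := hA (range s) (countable_range s) (range_nonempty s) hchain
  refine ⟨g, (limitSquareSkeletal_iff_skeletalFromTo (hT g)).mpr ?_, hg.1 (mem_range_self 0)⟩
  refine .of_isLUB_left hS (range_nonempty s) hchain.directedOn hg ?_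
  rintro _ ⟨n, rfl⟩
  exact (hnext n).mono_right (hg.1 (mem_range_self (n + 1))) (hT _)

end SpecMor

theorem exists_cofinal_supClosed_of_skeletal_limMap_general {τ : Cardinal.{u}}
    (hτ : Cardinal.aleph0 ≤ τ) {S T : InvSpec A} {F : SpecMor S T}
    (hSτ : IsPiTauSpectrum τ S) (hS : ∀ a, DenseRange (S.proj a))
    (hT : ∀ a, DenseRange (T.proj a)) (hF : Skeletal F.limMap) :
    ∃ B : Set A, IsCofinalSub B ∧ IsSupClosed B ∧
      (∀ a ∈ B, Skeletal (F.maps a)) ∧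
      (∀ a ∈ B, LimitSquareSkeletal F a) ∧
      (∀ a ∈ B, ∀ b ∈ B, ∀ h : a ≤ b, BondingSquareSkeletal F h) := by
  obtain ⟨hweight, hdir, hcomplete, hcont⟩ := hSτ
  have hnext (a : A) : ∃ b, a ≤ b ∧ F.SkeletalFromTo a b :=
    SpecMor.exists_ge_skeletalFromTo hτ hdir hT hF (hS a) (hweight a)
  exact ⟨{a | LimitSquareSkeletal F a},
    SpecMor.isCofinalSub_setOf_limitSquareSkeletal hcomplete hcont hT hnext,
    SpecMor.isSupClosed_setOf_limitSquareSkeletal hcont hT,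
    fun _ ha => SkeletalSquare.skeletal ha,
    fun _ ha => ha,
    fun _ ha b _ h => SpecMor.bondingSquareSkeletal_of_limitSquareSkeletal h (hT b) ha⟩

/-- If the limit map of a morphism between two πτ-spectra with surjective limit projections
is skeletal, then there is a cofinal τ-closed subset `B` of the index set such that the
restricted morphism is skeletal and has skeletal limit and bonding squares. -/
theorem exists_cofinal_supClosed_of_skeletal_limMap {A : Type u} [PartialOrder A]
    [Nonempty A] (τ : Cardinal.{u}) (hτ : Cardinal.aleph0 ≤ τ)
    (S T : InvSpec A) (F : SpecMor S T)
    (hSτ : IsPiTauSpectrum τ S) (hTτ : IsPiTauSpectrum τ T)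
    (hS : ∀ a : A, Function.Surjective (S.proj a))
    (hT : ∀ a : A, Function.Surjective (T.proj a))
    (hsk : Skeletal F.limMap) :
    ∃ B : Set A, IsCofinalSub B ∧ IsSupClosed B ∧
      (∀ a ∈ B, Skeletal (F.maps a)) ∧
      (∀ a ∈ B, LimitSquareSkeletal F a) ∧
      (∀ a ∈ B, ∀ b ∈ B, ∀ h : a ≤ b, BondingSquareSkeletal F h) :=
  exists_cofinal_supClosed_of_skeletal_limMap_general hτ hSτ (fun a => (hS a).denseRange)
    (fun a => (hT a).denseRange) hsk
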